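/- arXiv:1807.08321 — 2 statements merged into one kernel-verified Lean document; each statement's English description precedes it below -/
import Mathlib

section
/- Let φ = φ^(0), φ^(1), …, φ^(k) = ψ be non-erasing morphisms on {a,b} such that for each i ∈ {0,…,k−1} there is a finite word π_{i+1} with the property that for each letter x ∈ {a,b}, φ^(i)(x) = p_x·π_{i+1} and φ^(i+1)(x) = π_{i+1}·p_x for some word p_x (i.e., φ^(i+1) is obtained from φ^(i) by transferring the common suffix π_{i+1} to the left). Let π = π_k·π_{k−1}·⋯·π_1. Then for every infinite word w over {a,b}, ψ(w) = π·φ(w), where π·φ(w) denotes the infinite word obtained by prepending the finite word π to φ(w). -/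
/-!
The proof rests on a conjugacy relation between finite words. If `φ(c) = p·π` and `ψ(c) = π·p`, then
`ψ(c)·π = π·p·π = π·φ(c)`. Chaining this along the steps gives `ψ(c)·π = π·φ(c)` for the full
product `π = π_k⋯π_1` (`transfer_letter`), and hence `ψ(u)·π = π·φ(u)` for every finite word `u`
(`substList_conj`). Taking `u` to be a prefix of `w` long enough that both `ψ(u)` and `φ(u)` cover
the position under consideration, one reads off the letters of `ψ(w) = π·φ(w)`.
-/

/-- The factor `w[i..i+l-1]` of an infinite word, as a list. -/
def seg {α : Type*} (w : ℕ → α) (i l : ℕ) : List α :=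
  (List.range l).map fun k => w (i + k)

/-- The finite word `u` occurs in `w` at position `i`. -/
def occursAt {α : Type*} (u : List α) (w : ℕ → α) (i : ℕ) : Prop :=
  u = seg w i u.length

/-- `u` is a factor of the infinite word `w`. -/
def IsFactor {α : Type*} (u : List α) (w : ℕ → α) : Prop :=
  ∃ i, occursAt u w i

/-- The shift, erasing the first letter. -/
def shift {α : Type*} (w : ℕ → α) : ℕ → α := fun n => w (n + 1)

/-- Strict lexicographic order on infinite words. -/
def lexLt {α : Type*} [LinearOrder α] (u v : ℕ → α) : Prop :=
  ∃ n, (∀ k < n, u k = v k) ∧ u n < v n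

/-- Non-strict lexicographic order on infinite words. -/
def lexLe {α : Type*} [LinearOrder α] (u v : ℕ → α) : Prop :=
  lexLt u v ∨ u = v

/-- A morphism `φ : α → List α` applied to a finite word. -/
def substList {α : Type*} (φ : α → List α) (u : List α) : List α :=
  u.flatMap φ

/-- A (non-erasing) morphism applied to an infinite word:
letter number `n` of `φ(w[0])φ(w[1])⋯`. -/
def substInf {α : Type*} (φ : α → List α) (w : ℕ → α) : ℕ → α :=
  fun n => (substList φ (seg w 0 (n + 1))).getD n (w 0)

/-- A morphism is non-erasing if images of all letters are nonempty. -/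
def NonErasing {α : Type*} (φ : α → List α) : Prop := ∀ c, φ c ≠ []

/-- `w` is ultimately periodic, i.e. of the form `u·v·v·v·⋯` with `v` nonempty. -/
def UltimatelyPeriodic {α : Type*} (w : ℕ → α) : Prop :=
  ∃ p, 0 < p ∧ ∃ N, ∀ n, N ≤ n → w (n + p) = w n

/-- Membership in the orbit closure `L_w` of `w` (the closure of `{σⁿ(w)}` in the
product topology): every prefix of `z` occurs in `w`. -/
def InOrbitClosure {α : Type*} (z w : ℕ → α) : Prop :=
  ∀ n, ∃ m, seg z 0 n = seg w m n

/-- Every factor of `w` occurs infinitely often in `w`. -/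
def Recurrent {α : Type*} (w : ℕ → α) : Prop :=
  ∀ u : List α, IsFactor u w → ∀ N, ∃ i, N ≤ i ∧ occursAt u w i

/-- Every factor of `w` occurs in `w` with bounded gaps: there is `C` such that every
window of length `C` contains an occurrence. -/
def UniformlyRecurrent {α : Type*} (w : ℕ → α) : Prop :=
  ∀ u : List α, IsFactor u w →
    ∃ C, ∀ i, ∃ j, i ≤ j ∧ j + u.length ≤ i + C ∧ occursAt u w j

/-- A non-erasing morphism is order-preserving if for all infinite words `u, v`:
`u < v` iff `φ(u) < φ(v)`. -/
def OrderPreserving {α : Type*} [LinearOrder α] (φ : α → List α) : Prop :=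
  ∀ u v : ℕ → α, lexLt u v ↔ lexLt (substInf φ u) (substInf φ v)

/-- `z₀` is the lexicographically greatest element of `S`. -/
def IsLexGreatest {α : Type*} [LinearOrder α] (S : Set (ℕ → α)) (z₀ : ℕ → α) : Prop :=
  z₀ ∈ S ∧ ∀ z ∈ S, z = z₀ ∨ lexLt z z₀

/-- `z₀` is the lexicographically least element of `S`. -/
def IsLexLeast {α : Type*} [LinearOrder α] (S : Set (ℕ → α)) (z₀ : ℕ → α) : Prop :=
  z₀ ∈ S ∧ ∀ z ∈ S, z = z₀ ∨ lexLt z₀ z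

/-- A sequence of reals is equidistributed on `[0,1]`. -/
def Equidistributed (x : ℕ → ℝ) : Prop :=
  ∀ c d : ℝ, 0 ≤ c → c ≤ d → d ≤ 1 →
    Filter.Tendsto
      (fun N : ℕ => (((Finset.range N).filter fun n => c ≤ x n ∧ x n ≤ d).card : ℝ) / N)
      Filter.atTop (nhds (d - c))

/-- Prepend a finite word to an infinite word. -/
def prependWord {α : Type*} (u : List α) (w : ℕ → α) : ℕ → α :=
  fun n => if h : n < u.length then u.get ⟨n, h⟩ else w (n - u.length)

theorem length_le_length_substList {α : Type*} {φ : α → List α} (hφ : NonErasing φ) (u : List α) :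
    u.length ≤ (substList φ u).length := by
  induction u with
  | nil => simp
  | cons c u ih =>
    have hc : 0 < (φ c).length := List.length_pos_iff.mpr (hφ c)
    simp only [substList, List.flatMap_cons, List.length_append, List.length_cons] at ih ⊢
    omega

theorem length_seg {α : Type*} (w : ℕ → α) (i l : ℕ) : (seg w i l).length = l := by
  simp [seg]

theorem seg_add {α : Type*} (w : ℕ → α) (i l m : ℕ) :
    seg w i (l + m) = seg w i l ++ seg w (i + l) m := by
  simp [seg, List.range_add, Function.comp_def, Nat.add_assoc]

/-- Every prefix of `w` with more than `n` letters has an image that determines letter `n` of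
`φ(w)`; the default value in `substInf` is thus never used for a non-erasing morphism. -/
theorem getElem?_substList_seg {α : Type*} {φ : α → List α} (hφ : NonErasing φ) (w : ℕ → α)
    {n m : ℕ} (h : n < m) : (substList φ (seg w 0 m))[n]? = some (substInf φ w n) := by
  obtain ⟨d, rfl⟩ := Nat.exists_eq_add_of_lt h
  have hlen := length_le_length_substList hφ (seg w 0 (n + 1))
  rw [length_seg] at hlen
  have hn : n < (substList φ (seg w 0 (n + 1))).length := by omega
  have happ : substList φ (seg w 0 (n + d + 1)) =
      substList φ (seg w 0 (n + 1)) ++ substList φ (seg w (0 + (n + 1)) d) := by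
    rw [show n + d + 1 = (n + 1) + d by omega, seg_add]
    simp [substList]
  rw [happ, List.getElem?_append_left hn, substInf, List.getD_eq_getElem _ _ hn,
    List.getElem?_eq_getElem hn]

/-- A conjugacy relation on letters extends to finite words. -/
theorem substList_conj {α : Type*} {φ ψ : α → List α} {π : List α}
    (h : ∀ c, ψ c ++ π = π ++ φ c) (u : List α) :
    substList ψ u ++ π = π ++ substList φ u := by
  induction u with
  | nil => simp [substList]
  | cons c u ih =>
    simp only [substList, List.flatMap_cons] at ih ⊢
    rw [List.append_assoc, ih, ← List.append_assoc, h, List.append_assoc]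

theorem transfer_letter (k : ℕ) (φs : ℕ → Bool → List Bool) (πs : ℕ → List Bool)
    (hstep : ∀ i < k, ∀ c : Bool, ∃ p : List Bool,
        φs i c = p ++ πs (i + 1) ∧ φs (i + 1) c = πs (i + 1) ++ p) (c : Bool) :
    φs k c ++ ((List.range k).map fun i => πs (k - i)).flatten =
      ((List.range k).map fun i => πs (k - i)).flatten ++ φs 0 c := by
  induction k with
  | zero => simp
  | succ k ih =>
    have ih' := ih fun i hi => hstep i (by omega)
    obtain ⟨p, h₀, h₁⟩ := hstep k (by omega) c
    have hprod : ((List.range (k + 1)).map fun i => πs (k + 1 - i)).flatten =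
        πs (k + 1) ++ ((List.range k).map fun i => πs (k - i)).flatten := by
      simp [List.range_succ_eq_map, Function.comp_def]
    rw [hprod, List.append_assoc, ← ih', h₀, h₁]
    simp only [List.append_assoc]

/-- (Alphabet `{a,b}`, `a = false`, `b = true`.)  Let
`φ = φ⁽⁰⁾, φ⁽¹⁾, …, φ⁽ᵏ⁾ = ψ` be non-erasing morphisms such that each `φ⁽ⁱ⁺¹⁾` is
obtained from `φ⁽ⁱ⁾` by transferring the common suffix `π_{i+1}` of the images of the
letters to the left.  Let `π = π_k·π_{k-1}·⋯·π_1`.  Then for every infinite word `w`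
we have `ψ(w) = π·φ(w)`. -/
theorem suffix_transfer_prepends (k : ℕ) (φs : ℕ → Bool → List Bool)
    (πs : ℕ → List Bool)
    (hne : ∀ i ≤ k, NonErasing (φs i))
    (hstep : ∀ i < k, ∀ c : Bool, ∃ p : List Bool,
        φs i c = p ++ πs (i + 1) ∧ φs (i + 1) c = πs (i + 1) ++ p)
    (π : List Bool) (hπ : π = ((List.range k).map fun i => πs (k - i)).flatten) :
    ∀ w : ℕ → Bool, substInf (φs k) w = prependWord π (substInf (φs 0) w) := by
  intro w
  subst hπ
  have hconj := substList_conj (transfer_letter k φs πs hstep)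
  generalize ((List.range k).map fun i => πs (k - i)).flatten = π at hconj
  funext n
  have hletter := congrArg (fun l : List Bool => l[n]?) (hconj (seg w 0 (n + 1)))
  have hψ := getElem?_substList_seg (hne k le_rfl) w (Nat.lt_succ_self n)
  have hn := (List.getElem?_eq_some_iff.mp hψ).1
  simp only [List.getElem?_append_left hn, hψ] at hletter
  unfold prependWord
  split_ifs with h
  · rw [List.getElem?_append_left h, List.getElem?_eq_getElem h] at hletter
    simpa using hletter
  · rw [List.getElem?_append_right (by omega),
      getElem?_substList_seg (hne 0 (Nat.zero_le k)) w (by omega)] at hletter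
    simpa using hletter
end

section
/- Let φ_tm be the Thue–Morse morphism (φ_tm(a) = ab, φ_tm(b) = ba, with a < b), w_tm its infinite fixed point starting with a, and L_tm the orbit closure of w_tm. For u ∈ L_tm, let τ(u) = (v[0], p) where (v, p) is the unique pair with v ∈ L_tm, p ∈ {0,1}, and u = σ^p(φ_tm(v)); order the four types by (b,1) < (a,0) < (b,0) < (a,1). Then for all u₁, u₂ ∈ L_tm: if τ(u₁) < τ(u₂) in this order, then u₁ < u₂ lexicographically. -/
/-- The Thue–Morse morphism on `{a,b}` (`a = false`, `b = true`): `a ↦ ab`, `b ↦ ba`. -/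
def tmMorph : Bool → List Bool := fun c => [c, !c]

/-- The rank of a Thue–Morse type `(c, p)` in the order `(b,1) < (a,0) < (b,0) < (a,1)`
(recall `a = false`, `b = true`). -/
def tmTypeRank (c : Bool) (p : ℕ) : ℕ :=
  if c = true ∧ p = 1 then 0
  else if c = false ∧ p = 0 then 1
  else if c = true ∧ p = 0 then 2
  else 3

theorem substList_tmMorph_getElem? (l : List Bool) (k : ℕ) :
    (substList tmMorph l)[2 * k]? = l[k]? ∧
      (substList tmMorph l)[2 * k + 1]? = l[k]?.map (!·) := by
  induction l generalizing k with
  | nil => simp [substList]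
  | cons c l ih =>
    have h : substList tmMorph (c :: l) = c :: (!c) :: substList tmMorph l := by
      simp [substList, tmMorph]
    rw [h]
    cases k with
    | zero => simp
    | succ k => simpa [Nat.mul_add] using ih k

theorem substInf_tmMorph_even (v : ℕ → Bool) (k : ℕ) :
    substInf tmMorph v (2 * k) = v k := by
  simp only [substInf, List.getD_eq_getElem?_getD, (substList_tmMorph_getElem? _ k).1]
  simp [seg, show k < 2 * k + 1 by omega]

theorem substInf_tmMorph_odd (v : ℕ → Bool) (k : ℕ) :
    substInf tmMorph v (2 * k + 1) = !v k := by
  simp only [substInf, List.getD_eq_getElem?_getD, (substList_tmMorph_getElem? _ k).2]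
  simp [seg, show k < 2 * k + 1 + 1 by omega]

/-- No word in the orbit closure of a fixed point of the Thue–Morse morphism starts with the cube
of a letter. -/
theorem InOrbitClosure.not_cube {w v : ℕ → Bool} (hfp : substInf tmMorph w = w)
    (hv : InOrbitClosure v w) : ¬ (v 0 = v 1 ∧ v 1 = v 2) := by
  have he : ∀ k, w (2 * k) = w k := fun k => by
    conv_lhs => rw [← hfp, substInf_tmMorph_even]
  have ho : ∀ k, w (2 * k + 1) = !w k := fun k => by
    conv_lhs => rw [← hfp, substInf_tmMorph_odd]
  have pair : ∀ k, w (2 * k) ≠ w (2 * k + 1) := fun k => by simp [he, ho]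
  obtain ⟨m, hm⟩ := hv 3
  simp only [seg, List.range_succ, List.range_zero] at hm
  simp only [List.nil_append, List.cons_append, List.map_cons, List.map_nil, List.cons.injEq,
    Nat.zero_add, Nat.add_zero, and_true] at hm
  obtain ⟨e0, e1, e2⟩ := hm
  rw [e0, e1, e2]
  rintro ⟨h1, h2⟩
  -- The two letters forming an image `c c̄` sit at `m, m + 1` or at `m + 1, m + 2`.
  rcases Nat.even_or_odd' m with ⟨k, rfl | rfl⟩
  · exact pair k h1
  · exact pair (k + 1) h2

/-- Let `w` be the Thue–Morse word and `L_tm` its orbit closure.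
If `u₁ = σ^{p₁}(φ_tm(v₁))` and `u₂ = σ^{p₂}(φ_tm(v₂))` with `v₁, v₂ ∈ L_tm` and
`p₁, p₂ ∈ {0,1}`, and the type `(v₁[0], p₁)` is smaller than `(v₂[0], p₂)` in the
order `(b,1) < (a,0) < (b,0) < (a,1)`, then `u₁ < u₂` lexicographically. -/
theorem thueMorse_types_separated (w : ℕ → Bool) (h0 : w 0 = false)
    (hfp : substInf tmMorph w = w)
    (u₁ u₂ v₁ v₂ : ℕ → Bool) (p₁ p₂ : ℕ)
    (hu₁ : InOrbitClosure u₁ w) (hu₂ : InOrbitClosure u₂ w)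
    (hv₁ : InOrbitClosure v₁ w) (hv₂ : InOrbitClosure v₂ w)
    (hp₁ : p₁ < 2) (hp₂ : p₂ < 2)
    (hd₁ : u₁ = shift^[p₁] (substInf tmMorph v₁))
    (hd₂ : u₂ = shift^[p₂] (substInf tmMorph v₂))
    (htype : tmTypeRank (v₁ 0) p₁ < tmTypeRank (v₂ 0) p₂) :
    lexLt u₁ u₂ := by
  
  have c₁ := hv₁.not_cube hfp
  have c₂ := hv₂.not_cube hfp
  have s (v : ℕ → Bool) : substInf tmMorph v 0 = v 0 ∧ substInf tmMorph v 1 = (!v 0) ∧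
      substInf tmMorph v 2 = v 1 ∧ substInf tmMorph v 3 = (!v 1) ∧
      substInf tmMorph v 4 = v 2 :=
    ⟨substInf_tmMorph_even v 0, substInf_tmMorph_odd v 0, substInf_tmMorph_even v 1,
      substInf_tmMorph_odd v 1, substInf_tmMorph_even v 2⟩
  obtain ⟨a0, a1, a2, a3, a4⟩ := s v₁
  obtain ⟨b0, b1, b2, b3, b4⟩ := s v₂
  -- The first four letters of both words already decide the comparison.
  have key : (u₁ 0 < u₂ 0) ∨ (u₁ 0 = u₂ 0 ∧ u₁ 1 < u₂ 1) ∨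
      (u₁ 0 = u₂ 0 ∧ u₁ 1 = u₂ 1 ∧ u₁ 2 < u₂ 2) ∨
      (u₁ 0 = u₂ 0 ∧ u₁ 1 = u₂ 1 ∧ u₁ 2 = u₂ 2 ∧ u₁ 3 < u₂ 3) := by
    subst hd₁ hd₂
    clear hu₁ hu₂ hv₁ hv₂ s
    generalize v₁ 0 = x0 at *
    generalize v₁ 1 = x1 at *
    generalize v₁ 2 = x2 at *
    generalize v₂ 0 = y0 at *
    generalize v₂ 1 = y1 at *
    generalize v₂ 2 = y2 at *
    interval_cases p₁ <;> interval_cases p₂ <;>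
      simp only [Function.iterate_zero, Function.iterate_one, id, shift, Nat.zero_add,
        Nat.reduceAdd, a0, a1, a2, a3, a4, b0, b1, b2, b3, b4] <;>
      clear a0 a1 a2 a3 a4 b0 b1 b2 b3 b4 <;>
      revert x0 x1 x2 y0 y1 y2 <;> decide
  rcases key with h | ⟨h0, h⟩ | ⟨h0, h1, h⟩ | ⟨h0, h1, h2, h⟩
  · exact ⟨0, by simp, h⟩
  · exact ⟨1, fun k hk => by interval_cases k; exact h0, h⟩
  · exact ⟨2, fun k hk => by interval_cases k <;> assumption, h⟩
  · exact ⟨3, fun k hk => by interval_cases k <;> assumption, h⟩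
end
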